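/- arXiv:1210.5263 — 7 statements merged into one kernel-verified Lean document; each statement's English description precedes it below -/
import Mathlib

section
/- Let F be an algebraically closed field and n a positive integer. If p, g ∈ F[x₁,…,xₙ] have the same zero set in Fⁿ, then there exists a polynomial d ∈ F[x₁,…,xₙ] such that d divides p, d divides g, and the zero set of d equals the common zero set of p and g. -/
/-!
By the Nullstellensatz, `Z(p) ⊆ Z(g)` means that `p` divides a power `g ^ m`. Hence `p` divides
`gcd p (g ^ m)`, which in turn divides `(gcd p g) ^ m`. Therefore `gcd p g` vanishes wherever `p`
does, and being a divisor of `p` it vanishes nowhere else.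
-/

open MvPolynomial

theorem dvd_gcd_pow_of_dvd_pow {α : Type*} [CommMonoidWithZero α] [GCDMonoid α] {a b : α} {m : ℕ}
    (h : a ∣ b ^ m) : a ∣ gcd a b ^ m :=
  (dvd_gcd dvd_rfl h).trans gcd_pow_right_dvd_pow_gcd

section Nullstellensatz

variable {σ k K : Type*} [Finite σ] [Field k] [Field K] [IsAlgClosed K] [Algebra k K]

theorem setOf_aeval_eq_zero_subset_iff_exists_dvd_pow {p g : MvPolynomial σ k} :
    {v : σ → K | aeval v p = 0} ⊆ {v | aeval v g = 0} ↔ ∃ m : ℕ, p ∣ g ^ m := by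
  calc {v : σ → K | aeval v p = 0} ⊆ {v | aeval v g = 0}
    _ ↔ g ∈ vanishingIdeal k (zeroLocus K (Ideal.span {p})) := by
      simp only [zeroLocus_span, Set.mem_singleton_iff, forall_eq, mem_vanishingIdeal_iff]
      rfl
    _ ↔ g ∈ (Ideal.span {p}).radical := by rw [vanishingIdeal_zeroLocus_eq_radical]
    _ ↔ ∃ m : ℕ, p ∣ g ^ m := by simp only [Ideal.mem_radical_iff, Ideal.mem_span_singleton]

theorem setOf_aeval_gcd_eq_zero_of_subset [GCDMonoid (MvPolynomial σ k)] {p g : MvPolynomial σ k}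
    (h : {v : σ → K | aeval v p = 0} ⊆ {v | aeval v g = 0}) :
    {v : σ → K | aeval v (gcd p g) = 0} = {v | aeval v p = 0} := by
  obtain ⟨m, hm⟩ := setOf_aeval_eq_zero_subset_iff_exists_dvd_pow.mp h
  apply Set.Subset.antisymm
  · exact fun v hv ↦ zero_dvd_iff.mp (hv ▸ map_dvd (aeval v) (gcd_dvd_left p g))
  · exact setOf_aeval_eq_zero_subset_iff_exists_dvd_pow.mpr ⟨m, dvd_gcd_pow_of_dvd_pow hm⟩

theorem stmt_0_general (p g : MvPolynomial σ k)
    (h : {v : σ → K | aeval v p = 0} ⊆ {v | aeval v g = 0}) :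
    ∃ d : MvPolynomial σ k, d ∣ p ∧ d ∣ g ∧
      {v : σ → K | aeval v d = 0} = {v | aeval v p = 0} := by
  let _ : GCDMonoid (MvPolynomial σ k) := UniqueFactorizationMonoid.toGCDMonoid _
  exact ⟨gcd p g, gcd_dvd_left p g, gcd_dvd_right p g, setOf_aeval_gcd_eq_zero_of_subset h⟩

end Nullstellensatz

theorem stmt_0 {F : Type*} [Field F] [IsAlgClosed F] (n : ℕ) (hn : 0 < n)
    (p g : MvPolynomial (Fin n) F)
    (h : {v : Fin n → F | MvPolynomial.eval v p = 0} =
         {v : Fin n → F | MvPolynomial.eval v g = 0}) :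
    ∃ d : MvPolynomial (Fin n) F, d ∣ p ∧ d ∣ g ∧
      {v : Fin n → F | MvPolynomial.eval v d = 0} =
        {v : Fin n → F | MvPolynomial.eval v p = 0} := by
  simp only [← coe_aeval_eq_eval, RingHom.coe_coe] at h ⊢
  exact stmt_0_general p g h.subset
end

section
/- Let p ∈ ℝ[x,y]. If deg_x p is odd or deg_y p is odd, then the zero set Z(p) = {(a,b) ∈ ℝ² : p(a,b) = 0} is uncountable. -/
/-!
View `p` as a polynomial in `X i` whose coefficients are polynomials in the remaining variables.
Where its leading coefficient does not vanish, the restriction of `p` to a line parallel to the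
`i`-th axis has degree `p.degreeOf i`, hence a zero when that degree is odd. Moving the line in
another coordinate direction `j`, the leading coefficient vanishes for only finitely many positions,
so all but finitely many scalars occur as the `j`-th coordinate of a zero of `p`.
-/

open Function MvPolynomial
open scoped Polynomial

theorem exists_isRoot_real_of_odd_natDegree_of_leadingCoeff_nonneg {f : ℝ[X]}
    (hf : Odd f.natDegree) (hlead : 0 ≤ f.leadingCoeff) : ∃ x, f.IsRoot x := by
  have hdeg : 0 < f.degree := Polynomial.natDegree_pos_iff_degree_pos.1 hf.pos
  have hdeg_neg : 0 < (f.comp (-Polynomial.X)).degree := by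
    simpa [← Polynomial.natDegree_pos_iff_degree_pos, Polynomial.natDegree_comp] using hf.pos
  have hlead_neg : (f.comp (-Polynomial.X)).leadingCoeff ≤ 0 := by
    simpa [Polynomial.leadingCoeff_comp, hf.neg_one_pow] using hlead
  have htop := f.tendsto_atTop_of_leadingCoeff_nonneg hdeg hlead
  have hbot := Polynomial.tendsto_atBot_of_leadingCoeff_nonpos _ hdeg_neg hlead_neg
  obtain ⟨a, ha⟩ := (htop.eventually_ge_atTop 0).exists
  obtain ⟨b, hb⟩ := (hbot.eventually_le_atBot 0).exists
  rw [Polynomial.eval_comp] at hb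
  exact mem_range_of_exists_le_of_exists_ge f.continuous ⟨_, hb⟩ ⟨a, ha⟩

theorem exists_isRoot_real_of_odd_natDegree {f : ℝ[X]} (hf : Odd f.natDegree) :
    ∃ x, f.IsRoot x := by
  rcases le_total 0 f.leadingCoeff with hlead | hlead
  · exact exists_isRoot_real_of_odd_natDegree_of_leadingCoeff_nonneg hf hlead
  · obtain ⟨x, hx⟩ := exists_isRoot_real_of_odd_natDegree_of_leadingCoeff_nonneg (f := -f)
      (by simpa using hf) (by simpa using hlead)
    exact ⟨x, by simpa using hx⟩

section LineRestriction

variable {σ R : Type*} [DecidableEq σ]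

/-- The restriction of `p` to the line through `x` parallel to the `i`-th axis, as a polynomial in
the `i`-th coordinate. -/
noncomputable def lineRestriction [CommSemiring R] (p : MvPolynomial σ R) (i : σ) (x : σ → R) :
    R[X] :=
  aeval (update (Polynomial.C ∘ x) i Polynomial.X) p

theorem eval_lineRestriction [CommSemiring R] (p : MvPolynomial σ R) (i : σ) (x : σ → R) (t : R) :
    (lineRestriction p i x).eval t = eval (update x i t) p := by
  rw [lineRestriction, aeval_def, polynomial_eval_eval₂, ← eval₂_id]
  congr 1
  · ext; simp
  · ext k
    rcases eq_or_ne k i with rfl | hk <;> simp [*]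

theorem lineRestriction_eq_map_optionEquivLeft [CommSemiring R] (p : MvPolynomial σ R) (i : σ)
    (x : σ → R) :
    lineRestriction p i x =
      (optionEquivLeft R {k // k ≠ i} (rename (Equiv.optionSubtypeNe i).symm p)).map
        (eval fun k : {k // k ≠ i} => x k) := by
  induction p using MvPolynomial.induction_on with
  | C a => simp [lineRestriction]
  | add p q hp hq => simp_all [lineRestriction]
  | mul_X p k hp =>
    rcases eq_or_ne k i with rfl | hk <;> simp_all [lineRestriction]

theorem exists_natDegree_lineRestriction_eq [CommSemiring R] {p : MvPolynomial σ R} (hp : p ≠ 0)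
    (i : σ) :
    ∃ q : MvPolynomial σ R, q ≠ 0 ∧
      ∀ x, eval x q ≠ 0 → (lineRestriction p i x).natDegree = p.degreeOf i := by
  set F := optionEquivLeft R {k // k ≠ i} (rename (Equiv.optionSubtypeNe i).symm p)
  have hF_ne : F ≠ 0 := by
    simpa [F, rename_eq_zero_iff_of_injective _ (Equiv.injective _)] using hp
  refine ⟨rename Subtype.val F.leadingCoeff, ?_, fun x hx => ?_⟩
  · simpa only [ne_eq, rename_eq_zero_iff_of_injective _ Subtype.val_injective,
      Polynomial.leadingCoeff_eq_zero] using hF_ne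
  · rw [eval_rename] at hx
    rw [lineRestriction_eq_map_optionEquivLeft, degreeOf_eq_natDegree]
    exact Polynomial.natDegree_map_of_leadingCoeff_ne_zero _ hx

theorem finite_setOf_eval_update_eq_zero [CommRing R] [IsDomain R] {q : MvPolynomial σ R}
    {x : σ → R} (hx : eval x q ≠ 0) (j : σ) : {u | eval (update x j u) q = 0}.Finite := by
  have hq : lineRestriction q j x ≠ 0 := fun h => hx <| by
    simpa [h] using (eval_lineRestriction q j x (x j)).symm
  simpa only [Polynomial.IsRoot.def, eval_lineRestriction] using
    Polynomial.finite_setOfPred_isRoot hq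

end LineRestriction

theorem finite_compl_image_apply_zeros {σ R : Type*} [CommRing R] [IsDomain R] [Infinite R]
    {p : MvPolynomial σ R} {i j : σ} (hji : j ≠ i)
    (hroot : ∀ f : R[X], f.natDegree = p.degreeOf i → ∃ t, f.IsRoot t) :
    ((fun z : σ → R => z j) '' {z | eval z p = 0})ᶜ.Finite := by
  classical
  have hp : p ≠ 0 := by
    rintro rfl
    simpa using hroot 1 (by simp)
  obtain ⟨q, hq, hdeg⟩ := exists_natDegree_lineRestriction_eq hp i
  obtain ⟨x, hx⟩ : ∃ x, eval x q ≠ 0 := by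
    contrapose! hq
    exact MvPolynomial.funext (by simpa using hq)
  refine (finite_setOf_eval_update_eq_zero hx j).subset (Set.compl_subset_comm.1 fun u hu => ?_)
  obtain ⟨t, ht⟩ := hroot _ (hdeg _ hu)
  rw [Polynomial.IsRoot.def, eval_lineRestriction] at ht
  exact ⟨_, ht, by simp [hji]⟩

theorem stmt_1_general {σ R : Type*} [Nontrivial σ] [CommRing R] [IsDomain R] [Uncountable R]
    (hroot : ∀ f : R[X], Odd f.natDegree → ∃ t, f.IsRoot t) (p : MvPolynomial σ R)
    (h : ∃ i, Odd (p.degreeOf i)) :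
    ¬ {z : σ → R | eval z p = 0}.Countable := by
  intro hcount
  obtain ⟨i, hi⟩ := h
  obtain ⟨j, hji⟩ := exists_ne i
  have hfin := finite_compl_image_apply_zeros (p := p) hji fun f hf => hroot f (hf ▸ hi)
  refine Set.not_countable_univ (α := R) ?_
  rw [← Set.union_compl_self]
  exact (hcount.image _).union hfin.countable

theorem stmt_1 (p : MvPolynomial (Fin 2) ℝ)
    (h : Odd (p.degreeOf 0) ∨ Odd (p.degreeOf 1)) :
    ¬ ({ab : ℝ × ℝ | MvPolynomial.eval ![ab.1, ab.2] p = 0}).Countable := by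
  intro hcount
  refine stmt_1_general (fun _ => exists_isRoot_real_of_odd_natDegree) p (Fin.exists_fin_two.2 h)
    ((hcount.preimage (finTwoArrowEquiv ℝ).injective).mono fun z hz => ?_)
  rwa [← (finTwoArrowEquiv ℝ).symm_apply_apply z] at hz
end

section
/- Let p, g ∈ ℝ[x,y] be two polynomials with the same zero set Z = Z(p) = Z(g), and let n = deg_x p. If the set of real numbers y₀ such that the horizontal line y = y₀ intersects Z in at least n distinct points (i.e., the set {x ∈ ℝ : (x, y₀) ∈ Z} has at least n elements) is infinite, then there exists d ∈ ℝ[x,y] such that d divides p, d divides g, and Z(d) = Z. -/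
/-!
View `p` and `g` as polynomials in `x` with coefficients in the ring of polynomials in `y`, and
divide: `c g = q p + r` with `0 ≠ c` free of `x` and `deg_x r < deg_x p`. On infinitely many lines
`y = y₀`, both `p` and `g`, and hence `r`, vanish at `deg_x p` or more points, so all coefficients
of `r` vanish at `y₀`. Hence `r = 0` and `p ∣ c g`, which forces `p = d e` with `d = gcd(p, g)` and
`e` free of `x`. Thus `Z(p)` is `Z(d)` together with horizontal lines. Each of these lines lies in
`Z(p)`, hence in `Z(g)`, so its equation divides both `p` and `g`, and therefore `d`.
-/

section Univariate

open Polynomial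

theorem exists_C_leadingCoeff_pow_mul_eq_mul_add {A : Type*} [CommRing A] {P : A[X]} (hP : P ≠ 0)
    (G : A[X]) :
    ∃ (k : ℕ) (q r : A[X]), C (P.leadingCoeff ^ k) * G = q * P + r ∧ r.degree < P.degree := by
  induction hn : G.natDegree using Nat.strong_induction_on generalizing G with
  | _ n ih =>
    rcases lt_or_ge G.degree P.degree with hlt | hle
    · exact ⟨0, 0, G, by simp, hlt⟩
    have hdeg : P.natDegree ≤ G.natDegree := natDegree_le_natDegree hle
    rcases G.natDegree.eq_zero_or_pos with hG | hG
    · have hP_deg : P.natDegree = 0 := by omega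
      refine ⟨1, G, 0, ?_, by simpa [bot_lt_iff_ne_bot] using hP⟩
      rw [pow_one, leadingCoeff, hP_deg, ← eq_C_of_natDegree_eq_zero hP_deg, add_zero, mul_comm]
    obtain ⟨k, q, r, hqr, hr⟩ := ih _
      (hn ▸ natDegree_cancelLeads_lt_of_natDegree_le_natDegree hdeg hG) (P.cancelLeads G) rfl
    refine ⟨k + 1, C (P.leadingCoeff ^ k) * C G.leadingCoeff * X ^ (G.natDegree - P.natDegree) + q,
      r, ?_, hr⟩
    rw [cancelLeads, Nat.sub_eq_zero_of_le hdeg] at hqr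
    rw [pow_succ, C_mul]
    linear_combination hqr

theorem eq_zero_of_degree_lt_of_le_encard_roots {k : Type*} [CommRing k] [IsDomain k] {f : k[X]}
    {n : ℕ} (hdeg : f.degree < n) (hroots : (n : ℕ∞) ≤ {x | f.eval x = 0}.encard) : f = 0 := by
  obtain ⟨t, ht, hcard⟩ := Set.exists_subset_encard_eq hroots
  have hfin : t.Finite := Set.finite_of_encard_eq_coe hcard
  refine eq_zero_of_degree_lt_of_eval_finset_eq_zero hfin.toFinset ?_ fun x hx ↦
    ht (hfin.mem_toFinset.1 hx)
  rw [hfin.encard_eq_coe_toFinset_card] at hcard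
  rwa [Nat.cast_inj.1 hcard]

theorem exists_dvd_C_mul_of_natDegree_le_encard_common_roots {A k ι : Type*} [CommRing A]
    [IsDomain A] [CommRing k] [IsDomain k] {φ : ι → A →+* k}
    (hφ : ∀ a, (∀ i, φ i a = 0) → a = 0) {P G : A[X]} (hP : P ≠ 0)
    (hroots : ∀ i, (P.natDegree : ℕ∞) ≤
      {x | (P.map (φ i)).eval x = 0 ∧ (G.map (φ i)).eval x = 0}.encard) :
    ∃ c ≠ 0, P ∣ C c * G := by
  obtain ⟨m, q, r, hqr, hr⟩ := exists_C_leadingCoeff_pow_mul_eq_mul_add hP G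
  have hr_map (i : ι) : r.map (φ i) = 0 := by
    refine eq_zero_of_degree_lt_of_le_encard_roots
      (degree_map_le.trans_lt (hr.trans_eq (degree_eq_natDegree hP)))
      ((hroots i).trans (Set.encard_le_encard fun x ⟨hPx, hGx⟩ ↦ ?_))
    simpa [hPx, hGx, eq_comm] using congrArg (fun F ↦ (F.map (φ i)).eval x) hqr
  have hr_zero : r = 0 := by
    ext j
    exact hφ _ fun i ↦ by rw [← coeff_map, hr_map, coeff_zero]
  exact ⟨P.leadingCoeff ^ m, pow_ne_zero m (leadingCoeff_ne_zero.2 hP),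
    q, by rw [hqr, hr_zero, add_zero, mul_comm]⟩

theorem exists_eq_gcd_mul_C_of_dvd_C_mul {A : Type*} [CommRing A] [IsDomain A] [GCDMonoid A[X]]
    {P G : A[X]} {c : A} (hP : P ≠ 0) (hc : c ≠ 0) (h : P ∣ C c * G) :
    ∃ e, P = gcd P G * C e := by
  obtain ⟨P', G', hP', hG', hunit⟩ := extract_gcd P G
  have hgcd : gcd P G ≠ 0 := gcd_ne_zero_of_left hP
  have hdvd : P' ∣ C c := by
    refine (gcd_isUnit_iff_isRelPrime.1 hunit).dvd_of_dvd_mul_right ?_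
    rwa [← mul_dvd_mul_iff_left hgcd, mul_left_comm, ← hP', ← hG']
  have hdeg : P'.natDegree = 0 := by
    simpa using natDegree_le_of_dvd hdvd (C_ne_zero.2 hc)
  exact ⟨P'.coeff 0, by rwa [← eq_C_of_natDegree_eq_zero hdeg]⟩

end Univariate

section Bivariate

open Polynomial
open scoped Polynomial.Bivariate

variable {R : Type*} [CommRing R] [IsDomain R]

theorem C_X_sub_C_dvd_iff_forall_evalEval_eq_zero [Infinite R] {P : R[X][Y]} {a : R} :
    C (X - C a) ∣ P ↔ ∀ b, P.evalEval a b = 0 := by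
  constructor
  · rintro ⟨Q, rfl⟩ b
    rw [evalEval_mul, evalEval_C, eval_sub, eval_X, eval_C, sub_self, zero_mul]
  · intro h
    have hmap : P.map (evalRingHom a) = 0 :=
      Polynomial.funext fun b ↦ by rw [map_evalRingHom_eval, h, eval_zero]
    refine (C_dvd_iff_dvd_coeff _ _).2 fun j ↦ dvd_iff_isRoot.2 ?_
    simpa using congrArg (coeff · j) hmap

theorem evalEval_gcd_eq_zero_of_eq_gcd_mul_C [Infinite R] [GCDMonoid R[X][Y]] {P G : R[X][Y]}
    (hsub : ∀ a b, P.evalEval a b = 0 → G.evalEval a b = 0) {e : R[X]} (he : P = gcd P G * C e)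
    {a b : R} (hab : P.evalEval a b = 0) : (gcd P G).evalEval a b = 0 := by
  rw [he, evalEval_mul, evalEval_C, mul_eq_zero] at hab
  refine hab.elim id fun hea ↦ ?_
  have hdvdP : C (X - C a) ∣ P :=
    he ▸ (_root_.map_dvd C (dvd_iff_isRoot.2 hea)).mul_left _
  have hdvdG : C (X - C a) ∣ G := C_X_sub_C_dvd_iff_forall_evalEval_eq_zero.2 fun b' ↦
    hsub a b' (C_X_sub_C_dvd_iff_forall_evalEval_eq_zero.1 hdvdP b')
  exact C_X_sub_C_dvd_iff_forall_evalEval_eq_zero.1 (dvd_gcd hdvdP hdvdG) b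

theorem exists_dvd_dvd_evalEval_eq_zero_iff [IsGCDMonoid R] {P G : R[X][Y]}
    (hsub : ∀ a b, P.evalEval a b = 0 → G.evalEval a b = 0)
    (hlines : {a | (P.natDegree : ℕ∞) ≤ {b | P.evalEval a b = 0}.encard}.Infinite) :
    ∃ D, D ∣ P ∧ D ∣ G ∧ ∀ a b, D.evalEval a b = 0 ↔ P.evalEval a b = 0 := by
  rcases eq_or_ne P 0 with rfl | hP
  · exact ⟨G, dvd_zero G, dvd_rfl, fun a b ↦ ⟨fun _ ↦ evalEval_zero a b, hsub a b⟩⟩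
  have : Infinite R := Set.infinite_univ_iff.1 (hlines.mono (Set.subset_univ _))
  obtain ⟨c, hc, hdvd⟩ : ∃ c ≠ 0, P ∣ C c * G := by
    refine exists_dvd_C_mul_of_natDegree_le_encard_common_roots
      (φ := fun a : {a | (P.natDegree : ℕ∞) ≤ {b | P.evalEval a b = 0}.encard} ↦ evalRingHom a.1)
      (fun f hf ↦ ?_) hP fun a ↦ a.2.trans (Set.encard_le_encard fun b hb ↦ ?_)
    · exact eq_zero_of_infinite_isRoot f (hlines.mono fun a ha ↦ hf ⟨a, ha⟩)
    · simpa only [Set.mem_ofPred_eq, map_evalRingHom_eval] using And.intro hb (hsub a.1 b hb)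
  obtain ⟨_⟩ : IsGCDMonoid R[X][Y] := inferInstance
  obtain ⟨e, he⟩ := exists_eq_gcd_mul_C_of_dvd_C_mul hP hc hdvd
  exact ⟨gcd P G, gcd_dvd_left P G, gcd_dvd_right P G, fun a b ↦
    ⟨fun h ↦ zero_dvd_iff.1 (h ▸ evalEval_dvd a b (gcd_dvd_left P G)),
      evalEval_gcd_eq_zero_of_eq_gcd_mul_C hsub he⟩⟩

end Bivariate

section FinTwo

open scoped Polynomial.Bivariate

/-- The identification of `R[x, y]` with `R[y][x]`: the variable `X 0` becomes the outer variable
of the iterated polynomial ring, so that `natDegree` is the degree in `x`, and `X 1` the inner one.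
(`equivMvPolynomial` from Mathlib has the opposite order.) -/
noncomputable def finTwoEquivBivariate (R : Type*) [CommSemiring R] :
    MvPolynomial (Fin 2) R ≃ₐ[R] R[X][Y] :=
  (MvPolynomial.finSuccEquiv R 1).trans
    (Polynomial.mapAlgEquiv (MvPolynomial.uniqueAlgEquiv R (Fin 1)))

variable {R : Type*} [CommSemiring R]

theorem natDegree_finTwoEquivBivariate (f : MvPolynomial (Fin 2) R) :
    (finTwoEquivBivariate R f).natDegree = f.degreeOf 0 := by
  rw [← MvPolynomial.natDegree_finSuccEquiv]
  exact Polynomial.natDegree_map_eq_of_injective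
    (f := (MvPolynomial.uniqueAlgEquiv R (Fin 1)).toAlgHom.toRingHom)
    (MvPolynomial.uniqueAlgEquiv R (Fin 1)).injective _

theorem finTwoEquivBivariate_X_zero :
    finTwoEquivBivariate R (MvPolynomial.X 0) = Polynomial.X := by
  simp [finTwoEquivBivariate, MvPolynomial.finSuccEquiv_X_zero]

theorem finTwoEquivBivariate_X_one :
    finTwoEquivBivariate R (MvPolynomial.X 1) = Polynomial.C Polynomial.X := by
  have hsucc : MvPolynomial.finSuccEquiv R 1 (MvPolynomial.X 1) =
      Polynomial.C (MvPolynomial.X 0) :=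
    MvPolynomial.finSuccEquiv_X_succ (n := 1) (j := 0)
  rw [finTwoEquivBivariate, AlgEquiv.trans_apply, hsucc, Polynomial.coe_mapAlgEquiv]
  simp

theorem evalEval_finTwoEquivBivariate (f : MvPolynomial (Fin 2) R) (a b : R) :
    (finTwoEquivBivariate R f).evalEval b a = MvPolynomial.eval ![a, b] f := by
  have hhom : (Polynomial.aevalAeval b a).comp (finTwoEquivBivariate R).toAlgHom =
      MvPolynomial.aeval ![a, b] := by
    ext i
    fin_cases i
    · simp [finTwoEquivBivariate_X_zero]
    · simp [finTwoEquivBivariate_X_one]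
  simpa only [AlgHom.comp_apply, AlgEquiv.coe_toAlgHom, Polynomial.coe_aevalAeval_eq_evalEval,
    MvPolynomial.aeval_eq_eval] using DFunLike.congr_fun hhom f

end FinTwo

theorem stmt_3_general {R : Type*} [CommRing R] [IsDomain R] [IsGCDMonoid R]
    (p g : MvPolynomial (Fin 2) R)
    (hsub : {ab : R × R | MvPolynomial.eval ![ab.1, ab.2] p = 0} ⊆
      {ab : R × R | MvPolynomial.eval ![ab.1, ab.2] g = 0})
    (hlines : {y₀ : R | (p.degreeOf 0 : ℕ∞) ≤
      {x : R | MvPolynomial.eval ![x, y₀] p = 0}.encard}.Infinite) :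
    ∃ d : MvPolynomial (Fin 2) R, d ∣ p ∧ d ∣ g ∧
      {ab : R × R | MvPolynomial.eval ![ab.1, ab.2] d = 0} =
        {ab : R × R | MvPolynomial.eval ![ab.1, ab.2] p = 0} := by
  simp only [← evalEval_finTwoEquivBivariate, ← natDegree_finTwoEquivBivariate] at hsub hlines ⊢
  obtain ⟨D, hDp, hDg, hD⟩ :=
    exists_dvd_dvd_evalEval_eq_zero_iff (fun b a hab ↦ hsub (a := (a, b)) hab) hlines
  obtain ⟨d, rfl⟩ := (finTwoEquivBivariate R).surjective D
  exact ⟨d, (map_dvd_iff _).1 hDp, (map_dvd_iff _).1 hDg, Set.ext fun ab ↦ hD ab.2 ab.1⟩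

theorem stmt_3 (p g : MvPolynomial (Fin 2) ℝ)
    (Z : Set (ℝ × ℝ))
    (hZp : Z = {ab : ℝ × ℝ | MvPolynomial.eval ![ab.1, ab.2] p = 0})
    (hZg : Z = {ab : ℝ × ℝ | MvPolynomial.eval ![ab.1, ab.2] g = 0})
    (hlines : {y₀ : ℝ | (p.degreeOf 0 : ℕ∞) ≤ {x : ℝ | (x, y₀) ∈ Z}.encard}.Infinite) :
    ∃ d : MvPolynomial (Fin 2) ℝ, d ∣ p ∧ d ∣ g ∧
      {ab : ℝ × ℝ | MvPolynomial.eval ![ab.1, ab.2] d = 0} = Z := by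
  subst hZp
  exact stmt_3_general p g hZg.le hlines
end

section
/- Let p, g ∈ ℝ[x,y] be two polynomials with the same zero set Z = Z(p) = Z(g), and let n = deg[p] be the total degree of p. Suppose there exist real numbers α, β, not both zero, such that the set of real numbers c for which the line {(x,y) ∈ ℝ² : αx + βy = c} contains at least n distinct points of Z is infinite. Then there exists d ∈ ℝ[x,y] such that d divides p, d divides g, and Z(d) = Z. -/
/-!
After a linear change of coordinates the lines are the fibres of the projection that forgets the
coordinate `x₀`. Let `p` be nonzero of total degree `n`, viewed as a polynomial in `x₀`. Its
coefficient of `x₀ ^ n` is a constant `a`. If `a` were zero, each special fibre would carry more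
zeros of `p` than its degree allows, so `p` would vanish on a Zariski dense family of fibres. Hence
`a` is invertible and `g` can be divided by `p`. The remainder has degree less than `n` in `x₀` and
vanishes at the `n` common zeros on each special fibre, so it is zero. Thus `p` itself divides `g`.
-/

section UnivariatePolynomials

open Polynomial

variable {A B ι : Type*} [CommRing A] [CommRing B] [IsDomain B]

lemma eq_zero_of_degree_lt_of_le_encard_zeros {P : B[X]} {d : ℕ} (hdeg : P.degree < d)
    (hzeros : (d : ℕ∞) ≤ {t | P.eval t = 0}.encard) : P = 0 := by
  obtain ⟨T, hT, hTcard⟩ := Set.exists_subset_encard_eq hzeros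
  obtain ⟨T, rfl⟩ := (Set.finite_of_encard_eq_coe hTcard).exists_finset_coe
  rw [Set.encard_coe_eq_coe_finsetCard, Nat.cast_inj] at hTcard
  exact eq_zero_of_degree_lt_of_eval_finset_eq_zero T (hTcard ▸ hdeg) fun _ ht ↦ hT ht

lemma eq_zero_of_degree_lt_of_forall_le_encard_zeros_map
    {φ : ι → A →+* B} (hφ : ∀ a, (∀ i, φ i a = 0) → a = 0) {P : A[X]} {d : ℕ}
    (hdeg : P.degree < d)
    (hzeros : ∀ i, (d : ℕ∞) ≤ {t | (P.map (φ i)).eval t = 0}.encard) : P = 0 := by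
  ext k
  refine hφ _ fun i ↦ ?_
  have hmap : P.map (φ i) = 0 :=
    eq_zero_of_degree_lt_of_le_encard_zeros (degree_map_le.trans_lt hdeg) (hzeros i)
  rw [← coeff_map, hmap, coeff_zero]

lemma dvd_of_monic_of_forall_le_encard_commonZeros_map
    {φ : ι → A →+* B} (hφ : ∀ a, (∀ i, φ i a = 0) → a = 0) {P Q : A[X]} (hP : P.Monic)
    (hzeros : ∀ i, (P.natDegree : ℕ∞) ≤
      {t | (P.map (φ i)).eval t = 0 ∧ (Q.map (φ i)).eval t = 0}.encard) : P ∣ Q := by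
  nontriviality A
  rw [← modByMonic_eq_zero_iff_dvd hP]
  refine eq_zero_of_degree_lt_of_forall_le_encard_zeros_map hφ
    ((degree_modByMonic_lt Q hP).trans_le degree_le_natDegree) fun i ↦
      (hzeros i).trans <| Set.encard_le_encard fun t ⟨htP, htQ⟩ ↦ ?_
  simp [modByMonic_eq_sub_mul_div, htP, htQ]

lemma dvd_of_isUnit_leadingCoeff_of_forall_le_encard_commonZeros_map
    {φ : ι → A →+* B} (hφ : ∀ a, (∀ i, φ i a = 0) → a = 0) {P Q : A[X]}
    (hP : IsUnit P.leadingCoeff)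
    (hzeros : ∀ i, (P.natDegree : ℕ∞) ≤
      {t | (P.map (φ i)).eval t = 0 ∧ (Q.map (φ i)).eval t = 0}.encard) : P ∣ Q := by
  obtain ⟨u, hu⟩ := hP
  have hmonic : (C (↑u⁻¹ : A) * P).Monic :=
    monic_C_mul_of_mul_leadingCoeff_eq_one (by rw [← hu, Units.inv_mul])
  refine (Dvd.intro_left _ rfl).trans
    (dvd_of_monic_of_forall_le_encard_commonZeros_map hφ hmonic fun i ↦ ?_)
  calc ((C (↑u⁻¹ : A) * P).natDegree : ℕ∞)
      ≤ P.natDegree := by exact_mod_cast natDegree_C_mul_le _ _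
    _ ≤ _ := hzeros i
    _ ≤ _ := Set.encard_le_encard ?_
  rintro t ⟨htP, htQ⟩
  exact ⟨by simp [htP], htQ⟩

end UnivariatePolynomials

section ChangeOfCoordinates

open MvPolynomial

variable {R σ τ υ : Type*} [CommSemiring R]

lemma totalDegree_bind₁_le {f : σ → MvPolynomial τ R} {d : ℕ} (hf : ∀ i, (f i).totalDegree ≤ d)
    (p : MvPolynomial σ R) : (bind₁ f p).totalDegree ≤ p.totalDegree * d := by
  rw [bind₁, aeval_def, eval₂_eq]
  refine totalDegree_finsetSum_le fun m hm ↦ ?_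
  calc (C (p.coeff m) * ∏ i ∈ m.support, f i ^ m i).totalDegree
      ≤ (C (p.coeff m)).totalDegree + (∏ i ∈ m.support, f i ^ m i).totalDegree :=
        totalDegree_mul _ _
    _ = (∏ i ∈ m.support, f i ^ m i).totalDegree := by rw [totalDegree_C, zero_add]
    _ ≤ ∑ i ∈ m.support, (f i ^ m i).totalDegree := totalDegree_finsetProd _ _
    _ ≤ ∑ i ∈ m.support, m i * d :=
        Finset.sum_le_sum fun i _ ↦ (totalDegree_pow _ _).trans (by gcongr; exact hf i)
    _ = (m.sum fun _ e ↦ e) * d := (Finset.sum_mul _ _ _).symm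
    _ ≤ p.totalDegree * d := by gcongr; exact le_totalDegree hm

variable [Fintype τ]

lemma eval_bind₁_toMvPolynomial (M : Matrix σ τ R) (v : τ → R) (p : MvPolynomial σ R) :
    eval v (bind₁ M.toMvPolynomial p) = eval (M.mulVec v) p := by
  rw [← aeval_eq_eval, aeval_bind₁]
  simp only [aeval_eq_eval, Matrix.toMvPolynomial_eval_eq_apply]

lemma bind₁_toMvPolynomial_bind₁_toMvPolynomial [Fintype υ] (M : Matrix σ τ R) (N : Matrix τ υ R)
    (p : MvPolynomial σ R) :
    bind₁ N.toMvPolynomial (bind₁ M.toMvPolynomial p) = bind₁ (M * N).toMvPolynomial p := by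
  simp only [bind₁_bind₁, ← Matrix.toMvPolynomial_mul]

end ChangeOfCoordinates

section FinSuccEquiv

open MvPolynomial

variable {R : Type*} [CommSemiring R] {n : ℕ}

lemma natDegree_finSuccEquiv_le_totalDegree (p : MvPolynomial (Fin (n + 1)) R) :
    (finSuccEquiv R n p).natDegree ≤ p.totalDegree :=
  natDegree_finSuccEquiv p ▸ degreeOf_le_totalDegree p 0

lemma exists_coeff_totalDegree_finSuccEquiv_eq_C (p : MvPolynomial (Fin (n + 1)) R) :
    ∃ a, (finSuccEquiv R n p).coeff p.totalDegree = C a := by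
  by_cases h : (finSuccEquiv R n p).coeff p.totalDegree = 0
  · exact ⟨0, by rw [h, C_0]⟩
  · have := totalDegree_coeff_finSuccEquiv_add_le p _ h
    exact ⟨_, totalDegree_eq_zero_iff_eq_C.mp (by omega)⟩

end FinSuccEquiv

section ParallelLines

open MvPolynomial

variable {K : Type*} [Field K] {n : ℕ}

lemma vanishingIdeal_pi_eq_bot {σ : Type*} {s : σ → Set K} (hs : ∀ i, (s i).Infinite) :
    vanishingIdeal K (Set.univ.pi s) = ⊥ :=
  (Submodule.eq_bot_iff _).mpr fun p hp ↦ funext_set s hs fun x hx ↦ by simpa using hp x hx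

theorem dvd_of_totalDegree_le_encard_commonZeros_cons {p g : MvPolynomial (Fin (n + 1)) K}
    (hp : p ≠ 0) {S : Set (Fin n → K)} (hS : vanishingIdeal K S = ⊥)
    (hzeros : ∀ s ∈ S, (p.totalDegree : ℕ∞) ≤
      {t : K | eval (Fin.cons t s) p = 0 ∧ eval (Fin.cons t s) g = 0}.encard) : p ∣ g := by
  let φ : S → MvPolynomial (Fin n) K →+* K := fun s ↦ eval s.1
  have hφ (a : MvPolynomial (Fin n) K) (ha : ∀ s, φ s a = 0) : a = 0 := by
    rw [← Ideal.mem_bot, ← hS]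
    exact fun s hs ↦ by simpa using ha ⟨s, hs⟩
  set P := finSuccEquiv K n p
  have hPzeros (s : S) : (p.totalDegree : ℕ∞) ≤ {t : K | (P.map (φ s)).eval t = 0 ∧
      ((finSuccEquiv K n g).map (φ s)).eval t = 0}.encard := by
    simpa only [eval_eq_eval_mv_eval'] using hzeros s.1 s.2
  have hP0 : P ≠ 0 := (map_ne_zero_iff _ (finSuccEquiv K n).injective).mpr hp
  have hdeg : P.natDegree = p.totalDegree := by
    by_contra hne
    have hlt : P.natDegree < p.totalDegree :=
      (natDegree_finSuccEquiv_le_totalDegree p).lt_of_ne hne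
    exact hP0 <| eq_zero_of_degree_lt_of_forall_le_encard_zeros_map hφ
      ((Polynomial.natDegree_lt_iff_degree_lt hP0).mp hlt) fun s ↦
        (hPzeros s).trans (Set.encard_le_encard fun t ht ↦ ht.1)
  obtain ⟨a, ha⟩ := exists_coeff_totalDegree_finSuccEquiv_eq_C p
  have hlead : P.leadingCoeff = C a := by rw [Polynomial.leadingCoeff, hdeg, ha]
  have ha0 : a ≠ 0 := by simpa [hlead] using Polynomial.leadingCoeff_ne_zero.mpr hP0
  rw [← map_dvd_iff (finSuccEquiv K n)]
  exact dvd_of_isUnit_leadingCoeff_of_forall_le_encard_commonZeros_map hφ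
    (hlead ▸ ha0.isUnit.map C) fun s ↦ hdeg ▸ hPzeros s

theorem dvd_of_totalDegree_le_encard_commonZeros_tail_mulVec
    {p g : MvPolynomial (Fin (n + 1)) K} (hp : p ≠ 0)
    {N : Matrix (Fin (n + 1)) (Fin (n + 1)) K} (hN : IsUnit N.det)
    {S : Set (Fin n → K)} (hS : vanishingIdeal K S = ⊥)
    (hzeros : ∀ s ∈ S, (p.totalDegree : ℕ∞) ≤
      {v | eval v p = 0 ∧ eval v g = 0 ∧ Fin.tail (N.mulVec v) = s}.encard) : p ∣ g := by
  have bind₁_inv (q : MvPolynomial (Fin (n + 1)) K) :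
      bind₁ N.toMvPolynomial (bind₁ N⁻¹.toMvPolynomial q) = q := by
    rw [bind₁_toMvPolynomial_bind₁_toMvPolynomial, N.nonsing_inv_mul hN,
      Matrix.toMvPolynomial_one, bind₁_X_left, AlgHom.id_apply]
  have inv_mulVec (v : Fin (n + 1) → K) : N⁻¹.mulVec (N.mulVec v) = v := by
    rw [Matrix.mulVec_mulVec, N.nonsing_inv_mul hN, Matrix.one_mulVec]
  suffices bind₁ N⁻¹.toMvPolynomial p ∣ bind₁ N⁻¹.toMvPolynomial g by
    simpa only [bind₁_inv] using map_dvd (bind₁ N.toMvPolynomial) this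
  have hp' : bind₁ N⁻¹.toMvPolynomial p ≠ 0 := fun h ↦ hp (by rw [← bind₁_inv p, h, map_zero])
  refine dvd_of_totalDegree_le_encard_commonZeros_cons hp' hS fun s hs ↦ ?_
  have cons_eq {v : Fin (n + 1) → K} (hv : Fin.tail (N.mulVec v) = s) :
      Fin.cons (N.mulVec v 0) s = N.mulVec v := by rw [← hv, Fin.cons_self_tail]
  calc ((bind₁ N⁻¹.toMvPolynomial p).totalDegree : ℕ∞)
      ≤ p.totalDegree := by
        simpa using totalDegree_bind₁_le (Matrix.toMvPolynomial_totalDegree_le N⁻¹) p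
    _ ≤ _ := hzeros s hs
    _ ≤ _ := Set.encard_le_encard_of_injOn (f := fun v ↦ N.mulVec v 0) ?_ ?_
  · rintro v ⟨hvp, hvg, hvs⟩
    simp [eval_bind₁_toMvPolynomial, cons_eq hvs, inv_mulVec, hvp, hvg]
  · rintro v ⟨-, -, hvs⟩ w ⟨-, -, hws⟩ (hvw : N.mulVec v 0 = N.mulVec w 0)
    rw [← inv_mulVec v, ← cons_eq hvs, hvw, cons_eq hws, inv_mulVec]

theorem dvd_of_infinite_totalDegree_le_encard_commonZeros {p g : MvPolynomial (Fin 2) K}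
    (hp : p ≠ 0) {α β : K} (hαβ : (α, β) ≠ (0, 0))
    (hlines : {c : K | (p.totalDegree : ℕ∞) ≤ {v : Fin 2 → K |
        eval v p = 0 ∧ eval v g = 0 ∧ α * v 0 + β * v 1 = c}.encard}.Infinite) : p ∣ g := by
  have hcoprime : IsCoprime α β := by
    by_cases hα : α = 0
    · exact ⟨0, β⁻¹, by grind⟩
    · exact ⟨α⁻¹, 0, by grind⟩
  obtain ⟨N, rfl, rfl⟩ := hcoprime.exists_SL2_row 1
  refine dvd_of_totalDegree_le_encard_commonZeros_tail_mulVec hp (N := N) (by simp)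
    (vanishingIdeal_pi_eq_bot (σ := Fin 1) fun _ ↦ hlines) fun s hs ↦
      (hs 0 trivial).trans <| Set.encard_le_encard ?_
  rintro v ⟨hvp, hvg, hvs⟩
  refine ⟨hvp, hvg, funext fun i ↦ ?_⟩
  rw [Subsingleton.elim i 0, ← hvs]
  simp [Fin.tail, Matrix.mulVec, dotProduct, Fin.sum_univ_two]

theorem stmt_5_general {p g : MvPolynomial (Fin 2) K}
    (hpg : ∀ a b : K, eval ![a, b] p = 0 → eval ![a, b] g = 0)
    {α β : K} (hαβ : (α, β) ≠ (0, 0))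
    (hlines : {c : K | (p.totalDegree : ℕ∞) ≤ {ab : K × K |
        eval ![ab.1, ab.2] p = 0 ∧ α * ab.1 + β * ab.2 = c}.encard}.Infinite) : p ∣ g := by
  rcases eq_or_ne p 0 with rfl | hp
  · have : Infinite K := Set.infinite_univ_iff.mp (hlines.mono (Set.subset_univ _))
    suffices g = 0 from this ▸ dvd_rfl
    refine MvPolynomial.funext fun v ↦ ?_
    have hv : ![v 0, v 1] = v := FinVec.etaExpand_eq v
    rw [← hv, map_zero]
    exact hpg _ _ (map_zero _)
  refine dvd_of_infinite_totalDegree_le_encard_commonZeros hp hαβ (hlines.mono ?_)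
  intro c (hc : _ ≤ Set.encard _)
  refine hc.trans (Set.encard_le_encard_of_injOn (f := fun ab ↦ ![ab.1, ab.2]) ?_ ?_)
  · rintro ab ⟨hp, hc⟩
    exact ⟨hp, hpg _ _ hp, hc⟩
  · rintro ⟨a, b⟩ - ⟨c, d⟩ - h
    simpa using h

end ParallelLines

theorem stmt_5 (p g : MvPolynomial (Fin 2) ℝ)
    (Z : Set (ℝ × ℝ))
    (hZp : Z = {ab : ℝ × ℝ | MvPolynomial.eval ![ab.1, ab.2] p = 0})
    (hZg : Z = {ab : ℝ × ℝ | MvPolynomial.eval ![ab.1, ab.2] g = 0})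
    (α β : ℝ) (hαβ : (α, β) ≠ (0, 0))
    (hlines : {c : ℝ | (p.totalDegree : ℕ∞) ≤
        {ab : ℝ × ℝ | ab ∈ Z ∧ α * ab.1 + β * ab.2 = c}.encard}.Infinite) :
    ∃ d : MvPolynomial (Fin 2) ℝ, d ∣ p ∧ d ∣ g ∧
      {ab : ℝ × ℝ | MvPolynomial.eval ![ab.1, ab.2] d = 0} = Z := by
  subst hZp
  exact ⟨p, dvd_rfl, stmt_5_general (fun a b h ↦ (Set.ext_iff.mp hZg (a, b)).mp h) hαβ hlines, rfl⟩
end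

section
/- Every line in ℝ² intersects the curve x⁴ + y⁴ = 1 in at most two points: for all real numbers α, β, c with (α, β) ≠ (0, 0), the set {(x,y) ∈ ℝ² : x⁴ + y⁴ = 1 and αx + βy = c} has at most 2 elements. -/
/-!
Of three distinct points of a line, one lies strictly between the other two, and there a strictly
convex function is smaller than at one of these; so it cannot take the same value at all three.
The function `x ^ 4 + y ^ 4` is strictly convex on the plane.
-/

open Set Module

theorem mem_openSegment_of_sbtw {𝕜 E : Type*} [Ring 𝕜] [PartialOrder 𝕜] [IsOrderedRing 𝕜]
    [AddCommGroup E] [Module 𝕜 E] {x y z : E} (h : Sbtw 𝕜 x y z) : y ∈ openSegment 𝕜 x z := by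
  rw [openSegment_eq_image_lineMap]
  exact h.mem_image_Ioo

theorem encard_collinear_inter_levelSet_le_two {𝕜 E M : Type*}
    [Field 𝕜] [LinearOrder 𝕜] [IsStrictOrderedRing 𝕜] [AddCommGroup E] [Module 𝕜 E]
    [AddCommMonoid M] [LinearOrder M] [IsOrderedAddMonoid M] [Module 𝕜 M] [PosSMulStrictMono 𝕜 M]
    {s t : Set E} {f : E → M} (ht : Collinear 𝕜 t) (hf : StrictConvexOn 𝕜 s f) (r : M) :
    (t ∩ {x ∈ s | f x = r}).encard ≤ 2 := by
  have not_sbtw {x y z : E} (hx : x ∈ s ∧ f x = r) (hy : f y = r) (hz : z ∈ s ∧ f z = r) :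
      ¬ Sbtw 𝕜 x y z := fun h ↦ by
    have hlt := hf.lt_on_openSegment hx.1 hz.1 h.left_ne_right (mem_openSegment_of_sbtw h)
    rw [hx.2, hy, hz.2, max_self] at hlt
    exact hlt.false
  by_contra! hlt
  obtain ⟨u, hu, hu_card⟩ := exists_subset_encard_eq (k := 3) (Order.add_one_le_of_lt hlt)
  obtain ⟨x, y, z, hxy, hxz, hyz, rfl⟩ := encard_eq_three.1 hu_card
  obtain ⟨-, hx⟩ : x ∈ t ∩ {x ∈ s | f x = r} := hu (by simp)
  obtain ⟨-, hy⟩ : y ∈ t ∩ {x ∈ s | f x = r} := hu (by simp)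
  obtain ⟨-, hz⟩ : z ∈ t ∩ {x ∈ s | f x = r} := hu (by simp)
  rcases (ht.subset (hu.trans inter_subset_left)).wbtw_or_wbtw_or_wbtw with h | h | h
  · exact not_sbtw hx hy.2 hz ⟨h, hxy.symm, hyz⟩
  · exact not_sbtw hy hz.2 hx ⟨h, hyz.symm, hxz.symm⟩
  · exact not_sbtw hz hx.2 hy ⟨h, hxz, hxy⟩

theorem strictConvexOn_fst_add_snd {𝕜 E F M : Type*} [Semiring 𝕜] [PartialOrder 𝕜]
    [AddCommMonoid E] [AddCommMonoid F] [Module 𝕜 E] [Module 𝕜 F]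
    [AddCommMonoid M] [PartialOrder M] [IsOrderedCancelAddMonoid M] [Module 𝕜 M]
    {s : Set E} {t : Set F} {f : E → M} {g : F → M}
    (hf : StrictConvexOn 𝕜 s f) (hg : StrictConvexOn 𝕜 t g) :
    StrictConvexOn 𝕜 (s ×ˢ t) fun p ↦ f p.1 + g p.2 := by
  refine ⟨hf.1.prod hg.1, fun p hp q hq hpq a b ha hb hab ↦ ?_⟩
  rw [smul_add, smul_add, add_add_add_comm]
  have hf_le := hf.convexOn.2 hp.1 hq.1 ha.le hb.le hab
  have hg_le := hg.convexOn.2 hp.2 hq.2 ha.le hb.le hab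
  by_cases hfst : p.1 = q.1
  · have hsnd : p.2 ≠ q.2 := fun hsnd ↦ hpq (Prod.ext hfst hsnd)
    exact add_lt_add_of_le_of_lt hf_le (hg.2 hp.2 hq.2 hsnd ha hb hab)
  · exact add_lt_add_of_lt_of_le (hf.2 hp.1 hq.1 hfst ha hb hab) hg_le

theorem collinear_setOf_dual_apply_eq {K V : Type*} [DivisionRing K] [AddCommGroup V] [Module K V]
    (hV : finrank K V = 2) {φ : Dual K V} (hφ : φ ≠ 0) (c : K) :
    Collinear K {v | φ v = c} := by
  have : FiniteDimensional K V := .of_finrank_pos (by lia)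
  have hker : finrank K (LinearMap.ker φ) = 1 := by
    have := Dual.finrank_ker_add_one_of_ne_zero hφ
    lia
  have hspan : vectorSpan K {v | φ v = c} ≤ LinearMap.ker φ := by
    rw [vectorSpan_def, Submodule.span_le]
    rintro _ ⟨v, hv, w, hw, rfl⟩
    exact (map_sub φ v w).trans (sub_eq_zero.2 (hv.trans hw.symm))
  exact collinear_iff_finrank_le_one.2 ((Submodule.finrank_mono hspan).trans hker.le)

theorem collinear_setOf_mul_add_mul_eq {K : Type*} [Field K] {α β : K} (h : (α, β) ≠ (0, 0))
    (c : K) : Collinear K {p : K × K | α * p.1 + β * p.2 = c} := by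
  refine collinear_setOf_dual_apply_eq (φ := α • LinearMap.fst K K K + β • LinearMap.snd K K K)
    (by simp) (fun hφ ↦ h ?_) c
  have hα : α = 0 := by simpa using LinearMap.congr_fun hφ (1, 0)
  have hβ : β = 0 := by simpa using LinearMap.congr_fun hφ (0, 1)
  rw [hα, hβ]

theorem stmt_10_general {𝕜 M : Type*} [Field 𝕜] [LinearOrder 𝕜] [IsStrictOrderedRing 𝕜]
    [AddCommMonoid M] [LinearOrder M] [IsOrderedCancelAddMonoid M]
    [Module 𝕜 M] [PosSMulStrictMono 𝕜 M]
    {s t : Set 𝕜} {f g : 𝕜 → M} (hf : StrictConvexOn 𝕜 s f) (hg : StrictConvexOn 𝕜 t g)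
    (r : M) (α β c : 𝕜) (h : (α, β) ≠ (0, 0)) :
    {xy : 𝕜 × 𝕜 | xy ∈ s ×ˢ t ∧ f xy.1 + g xy.2 = r ∧ α * xy.1 + β * xy.2 = c}.encard ≤ 2 := by
  refine (encard_le_encard ?_).trans <| encard_collinear_inter_levelSet_le_two
    (collinear_setOf_mul_add_mul_eq h c) (strictConvexOn_fst_add_snd hf hg) r
  exact fun xy ⟨hst, hr, hc⟩ ↦ ⟨hc, hst, hr⟩

theorem stmt_10 (α β c : ℝ) (h : (α, β) ≠ (0, 0)) :
    {xy : ℝ × ℝ | xy.1 ^ 4 + xy.2 ^ 4 = 1 ∧ α * xy.1 + β * xy.2 = c}.encard ≤ 2 := by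
  have hpow : StrictConvexOn ℝ univ fun x : ℝ ↦ x ^ 4 :=
    Even.strictConvexOn_pow (by decide) (by decide)
  simpa using stmt_10_general hpow hpow 1 α β c h
end

section
/- In the noncommutative polynomial ring ℍ[x,y] over the quaternions, the polynomial p = XY − YX is not the product of two linear polynomials: there do not exist quaternions a, b, c, A, B, C such that X·Y − Y·X = ((a⊗1)·X + (b⊗1)·Y + (c⊗1)) · ((A⊗1)·X + (B⊗1)·Y + (C⊗1)). -/
open TensorProduct

set_option synthInstance.maxHeartbeats 1000000
set_option maxHeartbeats 1000000

/-- The noncommutative polynomial ring ℍ[x,y] over the quaternions. -/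
noncomputable abbrev QuatPoly : Type :=
  Quaternion ℝ ⊗[ℝ] FreeAlgebra ℝ (Fin 2)

/-- The variable X. -/
noncomputable def QuatPoly.X : QuatPoly := (1 : Quaternion ℝ) ⊗ₜ[ℝ] FreeAlgebra.ι ℝ (0 : Fin 2)

/-- The variable Y. -/
noncomputable def QuatPoly.Y : QuatPoly := (1 : Quaternion ℝ) ⊗ₜ[ℝ] FreeAlgebra.ι ℝ (1 : Fin 2)

/-- Embedding of a quaternion coefficient. -/
noncomputable def QuatPoly.coeff (q : Quaternion ℝ) : QuatPoly :=
  q ⊗ₜ[ℝ] (1 : FreeAlgebra ℝ (Fin 2))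

/-!
Over any coefficient ring `A`, the coefficient of `X i * X j` in a product
`(∑ k, f k • X k + c) * (∑ l, g l • X l + d)` is `f i * g j`. If the product is
`X i * X j - X j * X i`, then `f i * g i = 0`, `f i * g j = 1` and `f j * g i = -1`. When one-sided
inverses in `A` are two-sided, `f i` is a unit, so `g i = 0`, contradicting the third equation.
-/

open FreeAlgebra Module

section FreeMonoid

variable {σ : Type*}

theorem freeMonoid_of_mul_of_inj {i j k l : σ} :
    FreeMonoid.of i * .of j = .of k * .of l ↔ i = k ∧ j = l := by
  simp [← FreeMonoid.toList.apply_eq_iff_eq, FreeMonoid.toList_mul]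

theorem freeMonoid_of_ne_of_mul_of (i k l : σ) : FreeMonoid.of i ≠ .of k * .of l := by
  simp [← FreeMonoid.toList.apply_eq_iff_eq, FreeMonoid.toList_mul]

theorem freeMonoid_one_ne_of_mul_of (k l : σ) : 1 ≠ FreeMonoid.of k * .of l :=
  fun h ↦ by simpa using congrArg FreeMonoid.length h

end FreeMonoid

section WordBasis

variable (R A : Type*) {σ : Type*} [CommSemiring R]

theorem basisFreeMonoid_apply (w : FreeMonoid σ) :
    basisFreeMonoid R σ w = FreeMonoid.lift (ι R) w := by
  simp [basisFreeMonoid, equivMonoidAlgebraFreeMonoid]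

section Semiring

variable [Semiring A] [Algebra R A]

variable (σ) in
/-- The words in the letters `σ`, as a left `A`-basis of the noncommutative polynomial ring
`A ⊗[R] FreeAlgebra R σ`. The coordinates `(wordBasis R A σ).repr p` are the coefficients of `p`,
written to the left of the words. -/
noncomputable def wordBasis : Basis (FreeMonoid σ) A (A ⊗[R] FreeAlgebra R σ) :=
  (basisFreeMonoid R σ).baseChange A

theorem wordBasis_apply (w : FreeMonoid σ) :
    wordBasis R A σ w = 1 ⊗ₜ FreeMonoid.lift (ι R) w := by
  rw [wordBasis, Basis.baseChange_apply, basisFreeMonoid_apply]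

variable {A}

theorem tmul_ι_eq_smul_wordBasis (a : A) (i : σ) :
    a ⊗ₜ ι R i = a • wordBasis R A σ (.of i) := by
  simp [wordBasis_apply, smul_tmul']

theorem tmul_one_eq_smul_wordBasis (a : A) :
    a ⊗ₜ 1 = a • wordBasis R A σ 1 := by
  simp [wordBasis_apply, smul_tmul']

theorem smul_wordBasis_mul_smul_wordBasis (a b : A) (u v : FreeMonoid σ) :
    a • wordBasis R A σ u * b • wordBasis R A σ v = (a * b) • wordBasis R A σ (u * v) := by
  simp [wordBasis_apply, smul_tmul']

/-- The polynomial `∑ i, f i • X i + c` of degree at most one. -/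
noncomputable def affineForm (f : σ →₀ A) (c : A) : A ⊗[R] FreeAlgebra R σ :=
  (f.sum fun i a ↦ a ⊗ₜ ι R i) + c ⊗ₜ 1

theorem affineForm_mul_affineForm (f g : σ →₀ A) (c d : A) :
    affineForm R f c * affineForm R g d =
      ∑ k ∈ f.support, ∑ l ∈ g.support, (f k * g l) • wordBasis R A σ (.of k * .of l) +
        ∑ k ∈ f.support, (f k * d) • wordBasis R A σ (.of k) +
        (∑ l ∈ g.support, (c * g l) • wordBasis R A σ (.of l) + (c * d) • wordBasis R A σ 1) := by
  simp only [affineForm, Finsupp.sum, tmul_ι_eq_smul_wordBasis, tmul_one_eq_smul_wordBasis,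
    add_mul _ _ (_ + _), mul_add, Finset.sum_mul, Finset.mul_sum,
    smul_wordBasis_mul_smul_wordBasis, one_mul, mul_one]
  rw [Finset.sum_comm]

theorem wordBasis_repr_affineForm_mul_affineForm (f g : σ →₀ A) (c d : A) (i j : σ) :
    (wordBasis R A σ).repr (affineForm R f c * affineForm R g d) (.of i * .of j) =
      f i * g j := by
  classical
  have quadratic_coeff :
      ∑ k ∈ f.support, ∑ l ∈ g.support, (if k = i ∧ l = j then f k * g l else 0) = f i * g j := by
    by_cases hf : f i = 0 <;> by_cases hg : g j = 0 <;> simp [ite_and, hf, hg]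
  simp only [affineForm_mul_affineForm, map_add, map_sum, map_smul, Basis.repr_self,
    Finsupp.smul_single_one, Finsupp.add_apply, Finsupp.finsetSum_apply, Finsupp.single_apply,
    freeMonoid_of_mul_of_inj, freeMonoid_of_ne_of_mul_of, freeMonoid_one_ne_of_mul_of,
    if_false, Finset.sum_const_zero, add_zero, quadratic_coeff]

end Semiring

variable {A} in
theorem wordBasis_repr_commutator [Ring A] [Algebra R A] (i j : σ) :
    (wordBasis R A σ).repr ((1 ⊗ₜ ι R i) * (1 ⊗ₜ ι R j) - (1 ⊗ₜ ι R j) * (1 ⊗ₜ ι R i)) =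
      .single (.of i * .of j) 1 - .single (.of j * .of i) 1 := by
  simp only [tmul_ι_eq_smul_wordBasis, smul_wordBasis_mul_smul_wordBasis, map_sub, map_smul,
    Basis.repr_self, Finsupp.smul_single_one, mul_one]

end WordBasis

theorem stmt_12_general {R A σ : Type*} [CommSemiring R] [Ring A] [Nontrivial A]
    [IsDedekindFiniteMonoid A] [Algebra R A] {i j : σ} (hij : i ≠ j) (f g : σ →₀ A) (c d : A) :
    ((1 : A) ⊗ₜ[R] ι R i) * (1 ⊗ₜ ι R j) - (1 ⊗ₜ ι R j) * (1 ⊗ₜ ι R i) ≠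
      affineForm R f c * affineForm R g d := by
  classical
  intro h
  have coeff_eq (k l : σ) :
      f k * g l = (if i = k ∧ j = l then 1 else 0) - if j = k ∧ i = l then 1 else 0 := by
    rw [← wordBasis_repr_affineForm_mul_affineForm R f g c d, ← h, wordBasis_repr_commutator]
    simp only [Finsupp.sub_apply, Finsupp.single_apply, freeMonoid_of_mul_of_inj]
  have hii : f i * g i = 0 := by simpa [hij.symm] using coeff_eq i i
  have hij' : f i * g j = 1 := by simpa [hij] using coeff_eq i j
  have hji : f j * g i = -1 := by simpa [hij] using coeff_eq j i
  have hgi : g i = 0 :=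
    (isLeftRegular_of_mul_eq_one (mul_eq_one_symm hij')).mul_left_eq_zero_iff.mp hii
  simp [hgi] at hji

theorem QuatPoly.coeff_mul_X_add_coeff_mul_Y_add_coeff (a b c : Quaternion ℝ) :
    coeff a * X + coeff b * Y + coeff c =
      affineForm ℝ (Finsupp.equivFunOnFinite.symm ![a, b]) c := by
  simp [affineForm, X, Y, coeff, Finsupp.sum_fintype]

theorem stmt_12 :
    ¬ ∃ a b c A B C : Quaternion ℝ,
      QuatPoly.X * QuatPoly.Y - QuatPoly.Y * QuatPoly.X =
        (QuatPoly.coeff a * QuatPoly.X + QuatPoly.coeff b * QuatPoly.Y + QuatPoly.coeff c) *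
        (QuatPoly.coeff A * QuatPoly.X + QuatPoly.coeff B * QuatPoly.Y + QuatPoly.coeff C) := by
  rintro ⟨a, b, c, A, B, C, h⟩
  simp only [QuatPoly.coeff_mul_X_add_coeff_mul_Y_add_coeff] at h
  exact stmt_12_general zero_ne_one _ _ _ _ h
end

section
/- In the noncommutative polynomial ring ℍ[x,y] over the quaternions, let p = XY − YX and g = X²Y + Y²X − 2XYX. Then g is not the product of p and a linear polynomial on either side: there do not exist quaternions a, b, c such that g = p · ((a⊗1)·X + (b⊗1)·Y + (c⊗1)) or g = ((a⊗1)·X + (b⊗1)·Y + (c⊗1)) · p. -/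
open TensorProduct

set_option synthInstance.maxHeartbeats 1000000
set_option maxHeartbeats 1000000

/-!
Making the variables commute sends `xy - yx`, hence the two-sided ideal it generates, to `0`, while
it sends `x²y + y²x - 2xyx` to `xy² - x²y`, in which the monomial `xy²` has coefficient `1`.
-/

theorem mem_span_of_eq_mul_or_eq_mul {B : Type*} [NonUnitalNonAssocRing B] {x y z : B}
    (h : x = y * z ∨ x = z * y) : x ∈ TwoSidedIdeal.span {y} := by
  have y_mem : y ∈ TwoSidedIdeal.span {y} := TwoSidedIdeal.subset_span rfl
  rcases h with rfl | rfl
  · exact TwoSidedIdeal.mul_mem_right _ _ _ y_mem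
  · exact TwoSidedIdeal.mul_mem_left _ _ _ y_mem

theorem map_eq_zero_of_mem_span_mul_sub_mul {F B C : Type*} [NonUnitalNonAssocRing B]
    [NonUnitalNonAssocRing C] [FunLike F B C] [NonUnitalRingHomClass F B C] (f : F) {x y z : B}
    (hxy : Commute (f x) (f y)) (hz : z ∈ TwoSidedIdeal.span {x * y - y * x}) :
    f z = 0 := by
  have span_le_ker : TwoSidedIdeal.span {x * y - y * x} ≤ TwoSidedIdeal.ker f := by
    simp [TwoSidedIdeal.span_le, TwoSidedIdeal.mem_ker, hxy.eq]
  exact (TwoSidedIdeal.mem_ker f).mp (span_le_ker hz)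

theorem tmul_ne_zero_of_coeff_smul_ne_zero {R M σ : Type*} [CommSemiring R] [AddCommMonoid M]
    [Module R M] {a : M} {p : MvPolynomial σ R} {m : σ →₀ ℕ} (h : p.coeff m • a ≠ 0) :
    a ⊗ₜ[R] p ≠ 0 := by
  intro h_zero
  apply h
  simpa using congrArg (TensorProduct.rid R M) <|
    congrArg ((MvPolynomial.lcoeff R m).lTensor M) h_zero

open MvPolynomial in
theorem coeff_sq_mul_sub_sq_mul {R σ : Type*} [CommRing R] {i j : σ} (hij : i ≠ j) :
    (X j ^ 2 * X i - X i ^ 2 * X j : MvPolynomial σ R).coeff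
      (Finsupp.single j 2 + Finsupp.single i 1) = 1 := by
  classical
  have exponents_ne : Finsupp.single i 2 + Finsupp.single j 1 ≠
      (Finsupp.single j 2 + Finsupp.single i 1 : σ →₀ ℕ) := fun h => by
    simpa [hij] using DFunLike.congr_fun h i
  simp [X, monomial_pow, monomial_mul, coeff_monomial, exponents_ne]

section TensorFreeAlgebra

variable {R A σ : Type*} [CommSemiring R] [Semiring A] [Algebra R A]

variable (R A) in
/-- The variable indexed by `i` in the ring `A ⟨σ⟩` of polynomials in noncommuting variables with
coefficients in `A`, encoded as `A ⊗[R] FreeAlgebra R σ`; the variables commute with `A`. -/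
noncomputable def ncVar (i : σ) : A ⊗[R] FreeAlgebra R σ :=
  1 ⊗ₜ FreeAlgebra.ι R i

variable (R A σ) in
/-- The homomorphism `A ⟨σ⟩ → A [σ]` making the variables commute. As `MvPolynomial` requires
commutative coefficients, `A [σ]` is encoded as `A ⊗[R] MvPolynomial σ R`. -/
noncomputable def abelianizeVars : A ⊗[R] FreeAlgebra R σ →ₐ[R] A ⊗[R] MvPolynomial σ R :=
  Algebra.TensorProduct.map (AlgHom.id R A) (FreeAlgebra.lift R MvPolynomial.X)

theorem abelianizeVars_ncVar (i : σ) :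
    abelianizeVars R A σ (ncVar R A i) = 1 ⊗ₜ MvPolynomial.X i := by
  simp [abelianizeVars, ncVar]

theorem commute_abelianizeVars_ncVar (i j : σ) :
    Commute (abelianizeVars R A σ (ncVar R A i)) (abelianizeVars R A σ (ncVar R A j)) := by
  simp only [abelianizeVars_ncVar, commute_iff_eq, Algebra.TensorProduct.tmul_mul_tmul, mul_comm]

end TensorFreeAlgebra

open MvPolynomial in
theorem stmt_13_general {R A σ : Type*} [CommRing R] [Ring A] [Algebra R A] [Nontrivial A]
    {i j : σ} (hij : i ≠ j) :
    ncVar R A i ^ 2 * ncVar R A j + ncVar R A j ^ 2 * ncVar R A i -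
        2 * (ncVar R A i * ncVar R A j * ncVar R A i) ∉
      TwoSidedIdeal.span {ncVar R A i * ncVar R A j - ncVar R A j * ncVar R A i} := by
  intro h_mem
  have h_zero := map_eq_zero_of_mem_span_mul_sub_mul (abelianizeVars R A σ)
    (commute_abelianizeVars_ncVar i j) h_mem
  have h_image : abelianizeVars R A σ (ncVar R A i ^ 2 * ncVar R A j +
      ncVar R A j ^ 2 * ncVar R A i - 2 * (ncVar R A i * ncVar R A j * ncVar R A i)) =
      1 ⊗ₜ (X j ^ 2 * X i - X i ^ 2 * X j) := by
    simp only [map_sub, map_add, map_mul, map_pow, abelianizeVars_ncVar, two_mul,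
      Algebra.TensorProduct.tmul_pow, Algebra.TensorProduct.tmul_mul_tmul, one_pow, one_mul,
      ← TensorProduct.tmul_add, ← TensorProduct.tmul_sub]
    congr 1
    ring
  have h_coeff : (X j ^ 2 * X i - X i ^ 2 * X j : MvPolynomial σ R).coeff
      (Finsupp.single j 2 + Finsupp.single i 1) • (1 : A) ≠ 0 := by
    simp [coeff_sq_mul_sub_sq_mul hij]
  exact tmul_ne_zero_of_coeff_smul_ne_zero h_coeff (h_image.symm.trans h_zero)

theorem stmt_13 :
    ¬ ∃ a b c : Quaternion ℝ,
      (QuatPoly.X ^ 2 * QuatPoly.Y + QuatPoly.Y ^ 2 * QuatPoly.X -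
          2 * (QuatPoly.X * QuatPoly.Y * QuatPoly.X) =
        (QuatPoly.X * QuatPoly.Y - QuatPoly.Y * QuatPoly.X) *
          (QuatPoly.coeff a * QuatPoly.X + QuatPoly.coeff b * QuatPoly.Y + QuatPoly.coeff c)) ∨
      (QuatPoly.X ^ 2 * QuatPoly.Y + QuatPoly.Y ^ 2 * QuatPoly.X -
          2 * (QuatPoly.X * QuatPoly.Y * QuatPoly.X) =
        (QuatPoly.coeff a * QuatPoly.X + QuatPoly.coeff b * QuatPoly.Y + QuatPoly.coeff c) *
          (QuatPoly.X * QuatPoly.Y - QuatPoly.Y * QuatPoly.X)) := by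
  rintro ⟨a, b, c, h⟩
  exact stmt_13_general (R := ℝ) (A := Quaternion ℝ) Fin.zero_ne_one
    (mem_span_of_eq_mul_or_eq_mul h)
end
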